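/- Let ρ, M, M̃ be as in the model context and let Q be the unique bounded operator on L²(ρ) with Q∘M^{1/2} = M̃^{1/2} (positive square roots). Then Q is a strict contraction: ‖Qx‖ < ‖x‖ for every nonzero x ∈ L²(ρ). -/

import Mathlib

open MeasureTheory Filter
open scoped InnerProductSpace ENNReal

/-!
Write `S = M^{1/2}`, `T = M̃^{1/2}` and `v = 𝟙`, so that `Q S = T` and `T⁴ = S⁴ - ⟨·, v⟩ v`. Since
`M̃² ≤ M²`, operator monotonicity of the square root gives `T² ≤ S²`, hence `‖T y‖ ≤ ‖S y‖` and
`‖Q‖ ≤ 1`. From `S (M - Q† M̃ Q) S = ⟨·, v⟩ v` and the injectivity of `S` one gets `v = S g` and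
`M = Q† M̃ Q + ⟨·, g⟩ g` for some `g`.

If `‖Q x‖ = ‖x‖`, then `Q† Q x = x`, so `T Q x = S Q† Q x = S x`. Comparing `⟨M x, x⟩ = ‖S x‖²` with
`⟨Q† M̃ Q x, x⟩ = ‖T Q x‖²` yields `⟨g, x⟩ = 0`, and then `M x = Q† T T Q x = Q† T S x = Q† Q M x`.
So the fixed space of `Q† Q` is `M`-invariant and orthogonal to `g`. As `𝟙` is cyclic for `M`
(Weierstrass), so is `g`, and the fixed space is trivial.
-/

section Operators

open InnerProductSpace ContinuousLinearMap

theorem le_of_mul_self_le_mul_self_of_nonneg {A : Type*} [CStarAlgebra A] [PartialOrder A]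
    [StarOrderedRing A] {a b : A} (ha : 0 ≤ a) (hb : 0 ≤ b) (h : a * a ≤ b * b) : a ≤ b := by
  simpa only [CFC.sqrt_mul_self a ha, CFC.sqrt_mul_self b hb] using CFC.sqrt_le_sqrt _ _ h

theorem norm_le_one_of_comp_eq {𝕜 E F G : Type*} [NontriviallyNormedField 𝕜]
    [SeminormedAddCommGroup E] [NormedSpace 𝕜 E] [SeminormedAddCommGroup F] [NormedSpace 𝕜 F]
    [SeminormedAddCommGroup G] [NormedSpace 𝕜 G] {Q : F →L[𝕜] G} {S : E →L[𝕜] F} {T : E →L[𝕜] G}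
    (hQ : Q ∘L S = T) (hS : DenseRange S) (hTS : ∀ y, ‖T y‖ ≤ ‖S y‖) : ‖Q‖ ≤ 1 := by
  refine opNorm_le_bound _ zero_le_one fun x => ?_
  rw [one_mul]
  refine hS.induction_on x (isClosed_le (by fun_prop) (by fun_prop)) fun y => ?_
  simpa only [← hQ, comp_apply] using hTS y

theorem mul_star_eq_of_mul_eq {A : Type*} [Mul A] [StarMul A] {S T Q : A}
    (hS : IsSelfAdjoint S) (hT : IsSelfAdjoint T) (hQ : Q * S = T) : S * star Q = T := by
  rw [← hT.star_eq, ← hQ, star_mul, hS.star_eq]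

theorem conj_sub_star_mul_mul {A : Type*} [Ring A] [StarRing A] {S T Q : A}
    (hS : IsSelfAdjoint S) (hT : IsSelfAdjoint T) (hQ : Q * S = T) :
    S * (S * S - star Q * (T * T) * Q) * S = S * S * (S * S) - T * T * (T * T) := by
  calc S * (S * S - star Q * (T * T) * Q) * S
      = S * S * (S * S) - S * star Q * (T * T) * (Q * S) := by noncomm_ring
    _ = S * S * (S * S) - T * T * (T * T) := by
      rw [hQ, mul_star_eq_of_mul_eq hS hT hQ]
      noncomm_ring

variable {𝕜 E F G : Type*} [RCLike 𝕜]
  [NormedAddCommGroup E] [InnerProductSpace 𝕜 E] [CompleteSpace E]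
  [NormedAddCommGroup F] [InnerProductSpace 𝕜 F] [CompleteSpace F]
  [NormedAddCommGroup G] [InnerProductSpace 𝕜 G] [CompleteSpace G]

theorem norm_apply_le_norm_apply_of_adjoint_comp_self_le {A : E →L[𝕜] F} {B : E →L[𝕜] G}
    (h : adjoint A ∘L A ≤ adjoint B ∘L B) (x : E) : ‖A x‖ ≤ ‖B x‖ := by
  have hpos := ((le_def _ _).1 h).re_inner_nonneg_left x
  rw [sub_apply, inner_sub_left, map_sub, ← apply_norm_sq_eq_inner_adjoint_left,
    ← apply_norm_sq_eq_inner_adjoint_left, sub_nonneg] at hpos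
  exact le_of_sq_le_sq hpos (norm_nonneg _)

theorem norm_inner_le_norm_apply_of_rankOne_le {A : E →L[𝕜] F} {v : E}
    (h : rankOne 𝕜 v v ≤ adjoint A ∘L A) (x : E) : ‖⟪v, x⟫_𝕜‖ ≤ ‖A x‖ := by
  rw [rankOne_def', ← adjoint_innerSL_apply] at h
  exact norm_apply_le_norm_apply_of_adjoint_comp_self_le h x

theorem adjoint_apply_apply_eq_self_of_norm_apply_eq {Q : E →L[𝕜] F} (hQ : ‖Q‖ ≤ 1) {x : E}
    (hx : ‖Q x‖ = ‖x‖) : adjoint Q (Q x) = x := by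
  have hadj : ‖adjoint Q (Q x)‖ ≤ ‖x‖ := by
    simpa only [one_mul, hx] using
      (adjoint Q).le_of_opNorm_le ((adjoint.norm_map Q).trans_le hQ) (Q x)
  have hsq : ‖adjoint Q (Q x) - x‖ ^ 2 = ‖adjoint Q (Q x)‖ ^ 2 - ‖x‖ ^ 2 := by
    rw [norm_sub_sq (𝕜 := 𝕜), adjoint_inner_left, inner_self_eq_norm_sq, hx]
    ring
  have hle : ‖adjoint Q (Q x) - x‖ ^ 2 ≤ 0 := by
    rw [hsq, sub_nonpos]
    gcongr
  rwa [sq_nonpos_iff, norm_eq_zero, sub_eq_zero] at hle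

theorem denseRange_of_isSelfAdjoint_of_injective {S : E →L[𝕜] E} (hS : IsSelfAdjoint S)
    (hinj : Function.Injective S) : DenseRange S := by
  have hbot : S.rangeᗮ = ⊥ := by
    rw [orthogonal_range, hS.adjoint_eq, LinearMap.ker_eq_bot]
    exact hinj
  exact Submodule.dense_iff_topologicalClosure_eq_top.2
    (Submodule.topologicalClosure_eq_top_iff.2 hbot)

theorem exists_eq_rankOne_of_conj_eq_rankOne {S R : E →L[𝕜] E} {v : E} (hS : IsSelfAdjoint S)
    (hinj : Function.Injective S) (h : S * R * S = rankOne 𝕜 v v) :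
    ∃ g, S g = v ∧ R = rankOne 𝕜 g g := by
  have happly (y : E) : S (R (S y)) = ⟪v, y⟫_𝕜 • v := congr($h y)
  obtain ⟨g, hg⟩ : ∃ g, S g = v := by
    rcases eq_or_ne v 0 with rfl | hv
    · exact ⟨0, map_zero S⟩
    · exact ⟨(⟪v, v⟫_𝕜)⁻¹ • R (S v), by
        rw [map_smul, happly, inv_smul_smul₀ (inner_self_ne_zero.2 hv)]⟩
  refine ⟨g, hg, ContinuousLinearMap.ext_on
    (denseRange_of_isSelfAdjoint_of_injective hS hinj |>.mono Submodule.subset_span) ?_⟩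
  rintro _ ⟨y, rfl⟩
  apply hinj
  rw [happly, rankOne_apply, map_smul, ← hS.isSymmetric.apply_clm, hg]

section FixedSpace

variable {S T Q : E →L[𝕜] E} {g x : E}

theorem apply_eq_of_adjoint_apply_apply_eq_self (hS : IsSelfAdjoint S) (hT : IsSelfAdjoint T)
    (hQ : Q * S = T) (hx : adjoint Q (Q x) = x) : T (Q x) = S x := by
  rw [← mul_star_eq_of_mul_eq hS hT hQ, mul_apply_eq_comp, star_eq_adjoint, hx]

theorem inner_eq_zero_of_adjoint_apply_apply_eq_self (hS : IsSelfAdjoint S)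
    (hT : IsSelfAdjoint T) (hQ : Q * S = T)
    (hg : S * S - star Q * (T * T) * Q = rankOne 𝕜 g g) (hx : adjoint Q (Q x) = x) :
    ⟪g, x⟫_𝕜 = 0 := by
  have hS_norm : ⟪S (S x), x⟫_𝕜 = ⟪S x, S x⟫_𝕜 := hS.isSymmetric (S x) x
  have hT_norm : ⟪adjoint Q (T (T (Q x))), x⟫_𝕜 = ⟪S x, S x⟫_𝕜 := by
    rw [adjoint_inner_left, hT.isSymmetric.apply_clm,
      apply_eq_of_adjoint_apply_apply_eq_self hS hT hQ hx]
  have hgx : S (S x) - adjoint Q (T (T (Q x))) = ⟪g, x⟫_𝕜 • g := congr($hg x)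
  have hzero : ⟪⟪g, x⟫_𝕜 • g, x⟫_𝕜 = 0 := by
    rw [← hgx, inner_sub_left, hS_norm, hT_norm, sub_self]
  simpa only [inner_smul_left, mul_eq_zero, map_eq_zero, or_self] using hzero

theorem adjoint_apply_apply_mul_self_apply (hS : IsSelfAdjoint S) (hT : IsSelfAdjoint T)
    (hQ : Q * S = T) (hg : S * S - star Q * (T * T) * Q = rankOne 𝕜 g g)
    (hx : adjoint Q (Q x) = x) : adjoint Q (Q ((S * S) x)) = (S * S) x := by
  have hgx : S (S x) - adjoint Q (T (T (Q x))) = ⟪g, x⟫_𝕜 • g := congr($hg x)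
  rw [inner_eq_zero_of_adjoint_apply_apply_eq_self hS hT hQ hg hx, zero_smul, sub_eq_zero] at hgx
  calc adjoint Q (Q (S (S x)))
      = adjoint Q (T (S x)) := by rw [← hQ, mul_apply_eq_comp]
    _ = adjoint Q (T (T (Q x))) := by rw [apply_eq_of_adjoint_apply_apply_eq_self hS hT hQ hx]
    _ = S (S x) := hgx.symm

end FixedSpace

theorem norm_le_one_of_mul_eq_of_mul_self_mul_self_le {H : Type*} [NormedAddCommGroup H]
    [InnerProductSpace ℂ H] [CompleteSpace H] {S T Q : H →L[ℂ] H} (hS : IsSelfAdjoint S)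
    (hT : IsSelfAdjoint T) (hS_inj : Function.Injective S) (hQ : Q * S = T)
    (hle : T * T * (T * T) ≤ S * S * (S * S)) : ‖Q‖ ≤ 1 := by
  have hsq : T * T ≤ S * S :=
    le_of_mul_self_le_mul_self_of_nonneg hT.mul_self_nonneg hS.mul_self_nonneg hle
  have hadj : adjoint T ∘L T ≤ adjoint S ∘L S := by
    rwa [hT.adjoint_eq, hS.adjoint_eq]
  exact norm_le_one_of_comp_eq hQ (denseRange_of_isSelfAdjoint_of_injective hS hS_inj)
    (norm_apply_le_norm_apply_of_adjoint_comp_self_le hadj)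

end Operators

section CyclicVector

open InnerProductSpace ContinuousLinearMap

variable {𝕜 E : Type*} [RCLike 𝕜] [NormedAddCommGroup E] [InnerProductSpace 𝕜 E]

/-- `v` is a cyclic vector of the bounded operator `T`: the orbit `v, T v, T² v, …` spans a dense
subspace. -/
def IsCyclicVector (T : E →L[𝕜] E) (v : E) : Prop :=
  Dense (Submodule.span 𝕜 (Set.range fun n : ℕ => (T ^ n) v) : Set E)

variable [CompleteSpace E]

theorem isCyclicVector_iff {T : E →L[𝕜] E} {v : E} :
    IsCyclicVector T v ↔ ∀ z, (∀ n : ℕ, ⟪(T ^ n) v, z⟫_𝕜 = 0) → z = 0 := by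
  rw [IsCyclicVector, Submodule.dense_iff_topologicalClosure_eq_top,
    Submodule.topologicalClosure_eq_top_iff, Submodule.eq_bot_iff]
  refine forall_congr' fun z => imp_congr_left ?_
  rw [← Submodule.span_singleton_le_iff_mem, ← Submodule.isOrtho_iff_le, Submodule.isOrtho_comm,
    Submodule.isOrtho_span]
  simp only [Set.forall_mem_range, Set.mem_singleton_iff, forall_eq]

namespace IsCyclicVector

variable {S T : E →L[𝕜] E} {v g : E}

theorem eq_bot_of_invariant_of_orthogonal (hv : IsCyclicVector T v) (hT : IsSelfAdjoint T)
    {K : Submodule 𝕜 E} (hinv : ∀ x ∈ K, T x ∈ K) (horth : ∀ x ∈ K, ⟪v, x⟫_𝕜 = 0) : K = ⊥ := by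
  have hpow (n : ℕ) {x : E} (hx : x ∈ K) : (T ^ n) x ∈ K := by
    induction n with
    | zero => exact hx
    | succ n ih => exact pow_succ' T n ▸ hinv _ ih
  refine K.eq_bot_iff.2 fun x hx => isCyclicVector_iff.1 hv x fun n => ?_
  rw [(hT.pow n).isSymmetric.apply_clm]
  exact horth _ (hpow n hx)

theorem injective_of_rankOne_le (hv : IsCyclicVector T v) (hT : IsSelfAdjoint T)
    (hle : rankOne 𝕜 v v ≤ T * T) : Function.Injective T := by
  refine LinearMap.ker_eq_bot.1 (hv.eq_bot_of_invariant_of_orthogonal hT (K := T.ker) ?_ ?_)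
  · intro x (hx : T x = 0)
    rw [hx]
    exact zero_mem _
  · intro x (hx : T x = 0)
    have hle' : rankOne 𝕜 v v ≤ adjoint T ∘L T := by rwa [hT.adjoint_eq]
    simpa only [hx, norm_zero, norm_le_zero_iff] using norm_inner_le_norm_apply_of_rankOne_le hle' x

theorem of_apply_eq (hv : IsCyclicVector (S * S) v) (hS : IsSelfAdjoint S)
    (hinj : Function.Injective S) (hg : S g = v) : IsCyclicVector (S * S) g := by
  refine isCyclicVector_iff.2 fun z hz => (map_eq_zero_iff S hinj).1 ?_
  refine isCyclicVector_iff.1 hv (S z) fun n => ?_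
  have hcomm : S * (S * S) ^ n * S = (S * S) ^ (n + 1) := by
    rw [← sq, ← pow_mul, ← pow_succ', ← pow_succ, ← pow_mul]
    congr 1
  calc ⟪((S * S) ^ n) v, S z⟫_𝕜 = ⟪(S * (S * S) ^ n * S) g, z⟫_𝕜 := by
        rw [← hS.isSymmetric.apply_clm, ← hg, mul_apply_eq_comp, mul_apply_eq_comp]
    _ = ⟪((S * S) ^ (n + 1)) g, z⟫_𝕜 := by rw [hcomm]
    _ = 0 := hz (n + 1)

end IsCyclicVector

end CyclicVector

section Moments

variable {E : Type*} [NormedAddCommGroup E] [NormedSpace ℝ E] {μ : Measure ℝ} {a b : ℝ}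
  {f : ℝ → E} {g : ℝ → ℝ}

theorem integrable_smul_of_continuous_of_ae_mem_Icc (hμ : ∀ᵐ s ∂μ, s ∈ Set.Icc a b)
    (hf : Integrable f μ) (hg : Continuous g) : Integrable (fun s => g s • f s) μ := by
  obtain ⟨C, hC⟩ := isCompact_Icc.exists_bound_of_continuousOn (s := Set.Icc a b) hg.continuousOn
  exact hf.bdd_smul C hg.aestronglyMeasurable (hμ.mono hC)

theorem integral_polynomial_smul_eq_zero (hμ : ∀ᵐ s ∂μ, s ∈ Set.Icc a b) (hf : Integrable f μ)
    (hmoment : ∀ n : ℕ, ∫ s, s ^ n • f s ∂μ = 0) (p : Polynomial ℝ) :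
    ∫ s, p.eval s • f s ∂μ = 0 := by
  induction p using Polynomial.induction_on' with
  | add p q hp hq =>
    simp only [Polynomial.eval_add, add_smul]
    rw [integral_add (integrable_smul_of_continuous_of_ae_mem_Icc hμ hf p.continuous)
      (integrable_smul_of_continuous_of_ae_mem_Icc hμ hf q.continuous), hp, hq, add_zero]
  | monomial n c =>
    simp only [Polynomial.eval_monomial, mul_smul]
    rw [integral_smul, hmoment, smul_zero]

theorem integral_continuous_smul_eq_zero (hμ : ∀ᵐ s ∂μ, s ∈ Set.Icc a b) (hf : Integrable f μ)
    (hmoment : ∀ n : ℕ, ∫ s, s ^ n • f s ∂μ = 0) (hg : Continuous g) :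
    ∫ s, g s • f s ∂μ = 0 := by
  have hbound (ε : ℝ) (hε : 0 < ε) : ‖∫ s, g s • f s ∂μ‖ ≤ ε * ∫ s, ‖f s‖ ∂μ := by
    obtain ⟨p, hp⟩ := exists_polynomial_near_of_continuousOn a b g hg.continuousOn ε hε
    calc ‖∫ s, g s • f s ∂μ‖ = ‖∫ s, (g s - p.eval s) • f s ∂μ‖ := by
          simp only [sub_smul]
          rw [integral_sub (integrable_smul_of_continuous_of_ae_mem_Icc hμ hf hg)
            (integrable_smul_of_continuous_of_ae_mem_Icc hμ hf p.continuous),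
            integral_polynomial_smul_eq_zero hμ hf hmoment, sub_zero]
      _ ≤ ∫ s, ε * ‖f s‖ ∂μ := by
          refine norm_integral_le_of_norm_le (hf.norm.const_mul ε) (hμ.mono fun s hs => ?_)
          rw [norm_smul, Real.norm_eq_abs, abs_sub_comm]
          gcongr
          exact (hp s hs).le
      _ = ε * ∫ s, ‖f s‖ ∂μ := integral_const_mul _ _
  have hlim : Tendsto (fun ε : ℝ => ε * ∫ s, ‖f s‖ ∂μ) (nhdsWithin 0 (Set.Ioi 0)) (nhds 0) :=
    tendsto_nhdsWithin_of_tendsto_nhds (Continuous.tendsto' (by fun_prop) _ _ (zero_mul _))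
  exact norm_le_zero_iff.1 (ge_of_tendsto hlim (eventually_mem_nhdsWithin.mono hbound))

theorem ae_eq_zero_of_forall_integral_pow_smul_eq_zero [CompleteSpace E]
    (hμ : ∀ᵐ s ∂μ, s ∈ Set.Icc a b) (hf : Integrable f μ)
    (hmoment : ∀ n : ℕ, ∫ s, s ^ n • f s ∂μ = 0) : f =ᵐ[μ] 0 :=
  ae_eq_zero_of_integral_contDiff_smul_eq_zero hf.locallyIntegrable fun _ hg _ =>
    integral_continuous_smul_eq_zero hμ hf hmoment hg.continuous

end Moments

section Multiplication

theorem pow_apply_ae_eq_pow_mul {α 𝕜 : Type*} [RCLike 𝕜] {m : MeasurableSpace α} {μ : Measure α}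
    {p : ℝ≥0∞} [Fact (1 ≤ p)] {φ : α → 𝕜} {M : Lp 𝕜 p μ →L[𝕜] Lp 𝕜 p μ}
    (hM : ∀ f, ∀ᵐ s ∂μ, M f s = φ s * f s) (n : ℕ) (f : Lp 𝕜 p μ) :
    ∀ᵐ s ∂μ, (M ^ n) f s = φ s ^ n * f s := by
  induction n with
  | zero => simp
  | succ n ih =>
    rw [pow_succ', mul_apply_eq_comp]
    filter_upwards [ih, hM ((M ^ n) f)] with s hpow hstep
    rw [hstep, hpow, pow_succ', mul_assoc]

theorem isCyclicVector_of_ae_eq_one {ρ : Measure ℝ} [IsFiniteMeasure ρ] {a b : ℝ}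
    (hρ : ∀ᵐ s ∂ρ, s ∈ Set.Icc a b) {M : Lp ℂ 2 ρ →L[ℂ] Lp ℂ 2 ρ}
    (hM : ∀ f, ∀ᵐ s ∂ρ, M f s = (s : ℂ) * f s) {one : Lp ℂ 2 ρ}
    (hone : ∀ᵐ s ∂ρ, one s = 1) : IsCyclicVector M one := by
  refine isCyclicVector_iff.2 fun z hz => Lp.eq_zero_iff_ae_eq_zero.2 ?_
  have hz_int : Integrable z ρ := (Lp.memLp z).integrable one_le_two
  refine ae_eq_zero_of_forall_integral_pow_smul_eq_zero hρ hz_int fun n => ?_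
  rw [← hz n, L2.inner_def]
  refine integral_congr_ae ?_
  filter_upwards [pow_apply_ae_eq_pow_mul hM n one, hone] with s hpow hs
  rw [hpow, hs, mul_one, RCLike.inner_apply', map_pow, Complex.conj_ofReal, Complex.real_smul,
    Complex.ofReal_pow]

end Multiplication

open InnerProductSpace ContinuousLinearMap in
theorem Q_strict_contraction_general {H : Type*} [NormedAddCommGroup H] [InnerProductSpace ℂ H]
    [CompleteSpace H] {v : H} {M Mt Ms Mts Q : H →L[ℂ] H} (hv : IsCyclicVector M v)
    (hMt_sq : Mt * Mt = M * M - rankOne ℂ v v)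
    (hMs : IsSelfAdjoint Ms) (hMs_sq : Ms * Ms = M)
    (hMts : IsSelfAdjoint Mts) (hMts_sq : Mts * Mts = Mt)
    (hQ : Q * Ms = Mts) (x : H) (hx : x ≠ 0) : ‖Q x‖ < ‖x‖ := by
  subst hMs_sq hMts_sq
  have hM : IsSelfAdjoint (Ms * Ms) := hMs.mul_self_nonneg.isSelfAdjoint
  have hMt_sq_le : Mts * Mts * (Mts * Mts) ≤ Ms * Ms * (Ms * Ms) :=
    hMt_sq.trans_le (sub_le_self _ ((nonneg_iff_isPositive _).2 (isPositive_rankOne_self v)))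
  have hv_le : rankOne ℂ v v ≤ Ms * Ms * (Ms * Ms) :=
    sub_nonneg.1 (hMt_sq ▸ hMts.mul_self_nonneg.isSelfAdjoint.mul_self_nonneg)
  have hMs_inj : Function.Injective Ms :=
    .of_comp (f := Ms) (hv.injective_of_rankOne_le hM hv_le)
  have hQ_norm : ‖Q‖ ≤ 1 :=
    norm_le_one_of_mul_eq_of_mul_self_mul_self_le hMs hMts hMs_inj hQ hMt_sq_le
  obtain ⟨g, hg, hdecomp⟩ := exists_eq_rankOne_of_conj_eq_rankOne (v := v) hMs hMs_inj
    ((conj_sub_star_mul_mul hMs hMts hQ).trans (by rw [hMt_sq, sub_sub_cancel]))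
  have hfixed : (adjoint Q ∘L Q - 1).ker = ⊥ := by
    refine (hv.of_apply_eq hMs hMs_inj hg).eq_bot_of_invariant_of_orthogonal hM
      (fun y hy => sub_eq_zero.2 ?_) (fun y hy => ?_)
    · exact adjoint_apply_apply_mul_self_apply hMs hMts hQ hdecomp (sub_eq_zero.1 hy)
    · exact inner_eq_zero_of_adjoint_apply_apply_eq_self hMs hMts hQ hdecomp (sub_eq_zero.1 hy)
  refine ((Q.le_of_opNorm_le hQ_norm x).trans_eq (one_mul _)).lt_of_ne fun heq => hx ?_
  exact (Submodule.eq_bot_iff _).1 hfixed x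
    (sub_eq_zero.2 (adjoint_apply_apply_eq_self_of_norm_apply_eq hQ_norm heq))

/-- **`Q = M̃^{1/2} M^{-1/2}` is a strict contraction.** In the model `L²(ρ)` (with `ρ` a
finite measure of bounded support on `(0,∞)` satisfying `∫ s⁻² dρ ≤ 1`, `M` multiplication
by `s`, and `M̃ = (M² − ⟨·,𝟙⟩𝟙)^{1/2}`), the unique bounded operator `Q` with
`Q∘M^{1/2} = M̃^{1/2}` satisfies `‖Qx‖ < ‖x‖` for every nonzero `x`. -/
theorem Q_strict_contraction
    (ρ : Measure ℝ) [IsFiniteMeasure ρ]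
    (hcarr : ρ {s : ℝ | s ≤ 0} = 0)
    (hbddsupp : ∃ b : ℝ, ρ {s : ℝ | b < s} = 0)
    (hnorm : ∫⁻ s, ENNReal.ofReal (s⁻¹ ^ 2) ∂ρ ≤ 1)
    (one : Lp ℂ 2 ρ)
    (hone : ∀ᵐ s ∂ρ, (one : ℝ → ℂ) s = 1)
    (M Mt Ms Mts : Lp ℂ 2 ρ →L[ℂ] Lp ℂ 2 ρ)
    (hM : ∀ f : Lp ℂ 2 ρ, ∀ᵐ s ∂ρ, (M f : ℝ → ℂ) s = (s : ℂ) * (f : ℝ → ℂ) s)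
    (hMt_pos : Mt.IsPositive)
    (hMt_sq : ∀ f, Mt (Mt f) = M (M f) - ⟪one, f⟫_ℂ • one)
    (hMs_pos : Ms.IsPositive) (hMs_sq : ∀ f, Ms (Ms f) = M f)
    (hMts_pos : Mts.IsPositive) (hMts_sq : ∀ f, Mts (Mts f) = Mt f)
    (Q : Lp ℂ 2 ρ →L[ℂ] Lp ℂ 2 ρ) (hQ : Q.comp Ms = Mts) :
    ∀ x : Lp ℂ 2 ρ, x ≠ 0 → ‖Q x‖ < ‖x‖ := by
  obtain ⟨b, hb⟩ := hbddsupp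
  have hρ : ∀ᵐ s ∂ρ, s ∈ Set.Icc 0 b := by
    filter_upwards [measure_eq_zero_iff_ae_notMem.1 hcarr,
      measure_eq_zero_iff_ae_notMem.1 hb] with s hpos hle
    exact ⟨le_of_not_ge hpos, le_of_not_gt hle⟩
  exact Q_strict_contraction_general (isCyclicVector_of_ae_eq_one hρ hM hone)
    (ContinuousLinearMap.ext hMt_sq) hMs_pos.isSelfAdjoint (ContinuousLinearMap.ext hMs_sq)
    hMts_pos.isSelfAdjoint (ContinuousLinearMap.ext hMts_sq) hQ
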